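/- (One-step potential improvement for the smoothed best response update, underlying Lemma technical (b).) Consider a finite Markov game with smoothing parameter τ > 0 and smoothed value functions Ṽ_i. Suppose Φ̃ (a real number Φ̃(s,π) for each state s and profile π, with Φ̃(μ,π) = ∑_s μ(s)·Φ̃(s,π)) satisfies, for every state s, every player i, all π_i, π_i', and every π_{-i}: |(Φ̃(s,(π_i',π_{-i})) − Φ̃(s,(π_i,π_{-i}))) − (Ṽ_i(s,(π_i',π_{-i})) − Ṽ_i(s,(π_i,π_{-i})))| ≤ α. Let π be a profile, ī a player, and s̄ a state, and let π⁺_ī be the policy of player ī equal to π_ī at every state except s̄, where π⁺_ī(s̄,a) = exp(Q̃_ī(s̄,a;π)/τ)/∑_{a'} exp(Q̃_ī(s̄,a';π)/τ). Then for every probability distribution μ on S: Φ̃(μ,(π⁺_ī,π_{-ī})) − Φ̃(μ,π) ≥ (τ·μ(s̄)/2)·‖π⁺_ī(s̄) − π_ī(s̄)‖₂² − α. -/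

import Mathlib

open Finset

section MarkovGameDefs

variable {S : Type*} {I : Type*} {A : I → Type*}

/-- A probability vector on a finite set. -/
def IsProbVec {α : Type*} [Fintype α] (p : α → ℝ) : Prop :=
  (∀ a, 0 ≤ p a) ∧ ∑ a, p a = 1

/-- A stationary policy profile: each player's policy gives a probability vector at each state. -/
def IsPolicy [Fintype I] [∀ i, Fintype (A i)] (π : ∀ i, S → A i → ℝ) : Prop :=
  ∀ i s, IsProbVec (π i s)

/-- A transition kernel. -/
def IsKernel [Fintype S] (P : S → (∀ i, A i) → S → ℝ) : Prop :=
  ∀ s a, IsProbVec (fun s' => P s a s')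

/-- Product distribution on joint actions induced by a profile. -/
noncomputable def jointDist [Fintype I] (π : ∀ i, S → A i → ℝ) (s : S) (a : ∀ i, A i) : ℝ :=
  ∏ i, π i s (a i)

/-- Induced transition matrix `P^π`. -/
noncomputable def transMat [Fintype S] [Fintype I] [DecidableEq I] [∀ i, Fintype (A i)]
    (P : S → (∀ i, A i) → S → ℝ) (π : ∀ i, S → A i → ℝ) (s s' : S) : ℝ :=
  ∑ a : ∀ j, A j, jointDist π s a * P s a s'

/-- Expected one-stage payoff `u(s,π)`. -/
noncomputable def expPay [Fintype I] [DecidableEq I] [∀ i, Fintype (A i)]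
    (u : S → (∀ i, A i) → ℝ) (π : ∀ i, S → A i → ℝ) (s : S) : ℝ :=
  ∑ a : ∀ j, A j, jointDist π s a * u s a

/-- `V` solves the Bellman equation for payoff `u`, kernel `P`, discount `δ`, profile `π`. -/
def IsValueFun [Fintype S] [Fintype I] [DecidableEq I] [∀ i, Fintype (A i)]
    (δ : ℝ) (P : S → (∀ i, A i) → S → ℝ) (u : S → (∀ i, A i) → ℝ)
    (π : ∀ i, S → A i → ℝ) (V : S → ℝ) : Prop :=
  ∀ s, V s = expPay u π s + δ * ∑ s', transMat P π s s' * V s'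

/-- Player `i`'s Q-function, given a value function `V` for player `i` under `π`. -/
noncomputable def Qfun [Fintype S] [Fintype I] [DecidableEq I] [∀ i, Fintype (A i)]
    [∀ i, DecidableEq (A i)]
    (δ : ℝ) (P : S → (∀ i, A i) → S → ℝ) (u : S → (∀ i, A i) → ℝ)
    (π : ∀ i, S → A i → ℝ) (V : S → ℝ) (i : I) (s : S) (ai : A i) : ℝ :=
  ∑ a : ∀ j, A j,
    if a i = ai then
      (∏ j ∈ Finset.univ.erase i, π j s (a j)) * (u s a + δ * ∑ s', P s a s' * V s')
    else 0

/-- Discounted state visitation distribution `d_μ^π`. -/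
noncomputable def dvisit [Fintype S] [DecidableEq S] [Fintype I] [DecidableEq I]
    [∀ i, Fintype (A i)]
    (δ : ℝ) (P : S → (∀ i, A i) → S → ℝ) (π : ∀ i, S → A i → ℝ) (μ : S → ℝ) (s : S) : ℝ :=
  (1 - δ) * ∑' k : ℕ, δ ^ k * ∑ s0, μ s0 * ((Matrix.of (transMat P π)) ^ k) s0 s

/-- Negative entropy `ν(p) = ∑ p log p` (with the convention `0 log 0 = 0`,
which holds automatically since `Real.log 0 = 0`). -/
noncomputable def negent {α : Type*} [Fintype α] (p : α → ℝ) : ℝ :=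
  ∑ a, p a * Real.log (p a)

/-- `Ṽ` solves the Bellman equation of the `τ`-smoothed game for player `i`. -/
def IsSmoothedValueFun [Fintype S] [Fintype I] [DecidableEq I] [∀ i, Fintype (A i)]
    (δ τ : ℝ) (P : S → (∀ i, A i) → S → ℝ) (u : S → (∀ i, A i) → ℝ)
    (π : ∀ i, S → A i → ℝ) (i : I) (Vt : S → ℝ) : Prop :=
  ∀ s, Vt s = expPay u π s - τ * negent (π i s) + δ * ∑ s', transMat P π s s' * Vt s'

/-- Smoothed Q-function `Q̃_i(s,a_i;π)`. -/
noncomputable def Qsmooth [Fintype S] [Fintype I] [DecidableEq I] [∀ i, Fintype (A i)]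
    [∀ i, DecidableEq (A i)]
    (δ τ : ℝ) (P : S → (∀ i, A i) → S → ℝ) (u : S → (∀ i, A i) → ℝ)
    (π : ∀ i, S → A i → ℝ) (Vt : S → ℝ) (i : I) (s : S) (ai : A i) : ℝ :=
  ∑ a : ∀ j, A j,
    if a i = ai then
      (∏ j ∈ Finset.univ.erase i, π j s (a j)) *
        (u s a - τ * negent (π i s) + δ * ∑ s', P s a s' * Vt s')
    else 0

/-- Euclidean (ℓ²) norm on `α → ℝ`. -/
noncomputable def l2norm {α : Type*} [Fintype α] (f : α → ℝ) : ℝ :=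
  Real.sqrt (∑ a, f a ^ 2)

/-- Standard inner product on `α → ℝ`. -/
noncomputable def dotp {α : Type*} [Fintype α] (f g : α → ℝ) : ℝ :=
  ∑ a, f a * g a

/-- `y` is the Euclidean orthogonal projection of `x` onto the probability simplex. -/
noncomputable def IsProjSimplex {α : Type*} [Fintype α] (x y : α → ℝ) : Prop :=
  IsProbVec y ∧ ∀ z, IsProbVec z → l2norm (fun a => y a - x a) ≤ l2norm (fun a => z a - x a)

/-- Softmax (smoothed best response) with temperature `τ`. -/
noncomputable def softmax {α : Type*} [Fintype α] (τ : ℝ) (q : α → ℝ) (a : α) : ℝ :=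
  Real.exp (q a / τ) / ∑ a', Real.exp (q a' / τ)

end MarkovGameDefs

/-!
Write `𝓑` for the smoothed one-step Bellman operator of the updated profile. Viewed as a function of
player `i`'s mixed action at a state, the one-step return is `⟨p, Q̃⟩ - τ ν(p)` up to an additive
constant. By the Gibbs variational principle this equals its maximum minus `τ` times the relative
entropy of `p` with respect to the softmax of `Q̃`, and `1`-strong convexity of `x log x` on
`[0, 1]` bounds that relative entropy below by `‖·‖₂² / 2`. Hence `𝓑 Ṽ` exceeds `Ṽ` by at least
`(τ / 2) ‖·‖₂²` at the updated state and agrees with `Ṽ` elsewhere. A minimum principle for `δ P^π`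
turns `Ṽ ≤ 𝓑 Ṽ` into `𝓑 Ṽ ≤ Ṽ⁺`, and averaging over `μ` transfers the gain to the potential at
the cost of `α`.
-/

section StrongConvexity

theorem strongConvexOn_mul_log (M : ℝ) :
    StrongConvexOn (Set.Icc 0 M) M⁻¹ fun x => x * Real.log x := by
  simp only [strongConvexOn_iff_convex, Real.norm_eq_abs, sq_abs]
  refine convexOn_of_hasDerivWithinAt2_nonneg (convex_Icc 0 M)
    (f' := fun x => Real.log x + 1 - M⁻¹ * x) (f'' := fun x => x⁻¹ - M⁻¹)
    (by have := Real.continuous_mul_log; fun_prop) ?_ ?_ ?_ <;>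
    rw [interior_Icc] <;> rintro x ⟨hx, hxM⟩
  · refine ((Real.hasDerivAt_mul_log hx.ne').sub
      ((hasDerivAt_pow 2 x).const_mul (M⁻¹ / 2))).hasDerivWithinAt.congr_deriv ?_
    push_cast
    ring
  · refine (((Real.hasDerivAt_log hx.ne').add_const 1).sub
      ((hasDerivAt_id x).const_mul M⁻¹)).hasDerivWithinAt.congr_deriv ?_
    ring
  · exact sub_nonneg.2 (inv_anti₀ hx hxM.le)

theorem add_mul_sub_le_of_convexOn_of_hasDerivAt {s : Set ℝ} {f : ℝ → ℝ} {f' x y : ℝ}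
    (hf : ConvexOn ℝ s f) (hx : x ∈ s) (hy : y ∈ s) (hf' : HasDerivAt f f' x) :
    f x + f' * (y - x) ≤ f y := by
  rcases lt_trichotomy x y with hxy | rfl | hyx
  · have hslope := hf.le_slope_of_hasDerivAt hx hy hxy hf'
    rw [slope_def_field, le_div_iff₀ (sub_pos.2 hxy)] at hslope
    linarith
  · simp
  · have hslope := hf.slope_le_of_hasDerivAt hy hx hyx hf'
    rw [slope_def_field, div_le_iff₀ (sub_pos.2 hyx)] at hslope
    linarith

theorem add_mul_sub_add_sq_le_of_strongConvexOn_of_hasDerivAt {s : Set ℝ} {f : ℝ → ℝ}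
    {m f' x y : ℝ} (hf : StrongConvexOn s m f) (hx : x ∈ s) (hy : y ∈ s)
    (hf' : HasDerivAt f f' x) :
    f x + f' * (y - x) + m / 2 * (y - x) ^ 2 ≤ f y := by
  simp only [strongConvexOn_iff_convex, Real.norm_eq_abs, sq_abs] at hf
  have htangent := add_mul_sub_le_of_convexOn_of_hasDerivAt hf hx hy
    (hf'.sub ((hasDerivAt_pow 2 x).const_mul (m / 2)))
  push_cast at htangent
  linarith

theorem sub_add_sq_div_le_mul_log_sub_log {M x y : ℝ} (hx : 0 < x) (hxM : x ≤ M)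
    (hy : 0 ≤ y) (hyM : y ≤ M) :
    y - x + (x - y) ^ 2 / (2 * M) ≤ y * (Real.log y - Real.log x) := by
  have htangent := add_mul_sub_add_sq_le_of_strongConvexOn_of_hasDerivAt
    (strongConvexOn_mul_log M) ⟨hx.le, hxM⟩ ⟨hy, hyM⟩ (Real.hasDerivAt_mul_log hx.ne')
  have hsq : (x - y) ^ 2 / (2 * M) = M⁻¹ / 2 * (y - x) ^ 2 := by
    field_simp
    ring
  linarith

end StrongConvexity

section Entropy

variable {ι : Type*} [Fintype ι]

theorem sq_l2norm (f : ι → ℝ) : l2norm f ^ 2 = ∑ a, f a ^ 2 :=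
  Real.sq_sqrt (sum_nonneg fun a _ => sq_nonneg (f a))

theorem IsProbVec.le_one {p : ι → ℝ} (hp : IsProbVec p) (a : ι) : p a ≤ 1 :=
  hp.2 ▸ single_le_sum (fun b _ => hp.1 b) (mem_univ a)

theorem IsProbVec.sum_mul_add_const {p : ι → ℝ} (hp : IsProbVec p) (f : ι → ℝ) (c : ℝ) :
    ∑ a, p a * (f a + c) = ∑ a, p a * f a + c := by
  simp only [mul_add, sum_add_distrib, ← sum_mul, hp.2, one_mul]

theorem IsProbVec.mul_sub_le_sum_mul_sub_sum_mul [DecidableEq ι] {p : ι → ℝ} (hp : IsProbVec p)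
    {f g : ι → ℝ} {b : ι} {c α : ℝ} (h : ∀ a, g a + (Pi.single b c : ι → ℝ) a ≤ f a + α) :
    p b * c - α ≤ ∑ a, p a * f a - ∑ a, p a * g a := by
  have hsum : ∑ a, p a * (g a + (Pi.single b c : ι → ℝ) a) ≤ ∑ a, p a * (f a + α) :=
    sum_le_sum fun a _ => mul_le_mul_of_nonneg_left (h a) (hp.1 a)
  have hsingle : ∑ a, p a * (Pi.single b c : ι → ℝ) a = p b * c := dotProduct_single p c b
  rw [hp.sum_mul_add_const] at hsum
  simp only [mul_add, sum_add_distrib, hsingle] at hsum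
  linarith

/-- The relative entropy (Kullback–Leibler divergence) `∑ p log (p / q)` of finite vectors. Since
`Real.log 0 = 0`, it is the usual notion only if `p` vanishes wherever `q` does. -/
noncomputable def relEntropy (p q : ι → ℝ) : ℝ :=
  ∑ a, p a * (Real.log (p a) - Real.log (q a))

theorem relEntropy_self (p : ι → ℝ) : relEntropy p p = 0 := by
  simp [relEntropy]

theorem half_sq_l2norm_sub_le_relEntropy {p q : ι → ℝ} (hp : IsProbVec p) (hq : IsProbVec q)
    (hq_pos : ∀ a, 0 < q a) :
    l2norm (fun a => q a - p a) ^ 2 / 2 ≤ relEntropy p q :=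
  calc l2norm (fun a => q a - p a) ^ 2 / 2
      = ∑ a, (p a - q a + (q a - p a) ^ 2 / (2 * 1)) := by
        rw [sq_l2norm, sum_add_distrib, sum_sub_distrib, hp.2, hq.2, ← sum_div]
        ring
    _ ≤ relEntropy p q := sum_le_sum fun a _ =>
        sub_add_sq_div_le_mul_log_sub_log (hq_pos a) (hq.le_one a) (hp.1 a) (hp.le_one a)

/-- The expected payoff of the mixed action `p` against the payoff vector `q`, regularized by `τ`
times the entropy of `p`. -/
noncomputable def regularizedPayoff (τ : ℝ) (q p : ι → ℝ) : ℝ :=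
  ∑ a, p a * q a - τ * negent p

section Softmax

variable [Nonempty ι]

theorem sum_exp_div_pos (τ : ℝ) (q : ι → ℝ) : 0 < ∑ a, Real.exp (q a / τ) :=
  sum_pos (fun _ _ => Real.exp_pos _) univ_nonempty

theorem softmax_pos (τ : ℝ) (q : ι → ℝ) (a : ι) : 0 < softmax τ q a :=
  div_pos (Real.exp_pos _) (sum_exp_div_pos τ q)

theorem isProbVec_softmax (τ : ℝ) (q : ι → ℝ) : IsProbVec (softmax τ q) := by
  refine ⟨fun a => (softmax_pos τ q a).le, ?_⟩
  simp only [softmax, ← sum_div]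
  exact div_self (sum_exp_div_pos τ q).ne'

theorem mul_log_softmax {τ : ℝ} (hτ : τ ≠ 0) (q : ι → ℝ) (a : ι) :
    τ * Real.log (softmax τ q a) = q a - τ * Real.log (∑ b, Real.exp (q b / τ)) := by
  rw [softmax, Real.log_div (Real.exp_pos _).ne' (sum_exp_div_pos τ q).ne', Real.log_exp, mul_sub,
    mul_div_cancel₀ _ hτ]

theorem regularizedPayoff_eq_sub_relEntropy_softmax {τ : ℝ} (hτ : τ ≠ 0) (q : ι → ℝ)
    {p : ι → ℝ} (hp : IsProbVec p) :
    regularizedPayoff τ q p =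
      τ * Real.log (∑ a, Real.exp (q a / τ)) - τ * relEntropy p (softmax τ q) := by
  have hq : ∑ a, p a * q a =
      τ * ∑ a, p a * Real.log (softmax τ q a) + τ * Real.log (∑ a, Real.exp (q a / τ)) := by
    simp only [mul_sum, mul_left_comm τ, mul_log_softmax hτ]
    rw [← hp.sum_mul_add_const]
    simp only [sub_add_cancel]
  rw [regularizedPayoff, relEntropy, negent, hq]
  simp only [mul_sub, sum_sub_distrib]
  ring

theorem regularizedPayoff_add_sq_l2norm_le_softmax {τ : ℝ} (hτ : 0 < τ) (q : ι → ℝ)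
    {p : ι → ℝ} (hp : IsProbVec p) :
    regularizedPayoff τ q p + τ / 2 * l2norm (fun a => softmax τ q a - p a) ^ 2 ≤
      regularizedPayoff τ q (softmax τ q) := by
  have hsoftmax := isProbVec_softmax τ q
  have hentropy := mul_le_mul_of_nonneg_left
    (half_sq_l2norm_sub_le_relEntropy hp hsoftmax (softmax_pos τ q)) hτ.le
  rw [regularizedPayoff_eq_sub_relEntropy_softmax hτ.ne' q hp,
    regularizedPayoff_eq_sub_relEntropy_softmax hτ.ne' q hsoftmax, relEntropy_self]
  linarith

end Softmax

end Entropy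

section MinimumPrinciple

variable {S : Type*} [Fintype S]

theorem nonneg_of_discounted_mean_le {T : S → S → ℝ} (hT : ∀ s, IsProbVec (T s)) {δ : ℝ}
    (hδ : 0 ≤ δ) (hδ1 : δ < 1) {f : S → ℝ} (hf : ∀ s, δ * ∑ s', T s s' * f s' ≤ f s) (s : S) :
    0 ≤ f s := by
  have : Nonempty S := ⟨s⟩
  obtain ⟨m, hm⟩ := Finite.exists_min f
  have hmean : f m ≤ ∑ s', T m s' * f s' :=
    calc f m = ∑ s', T m s' * f m := by rw [← sum_mul, (hT m).2, one_mul]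
      _ ≤ ∑ s', T m s' * f s' :=
        sum_le_sum fun s' _ => mul_le_mul_of_nonneg_left (hm s') ((hT m).1 s')
  have hdiscount : δ * f m ≤ f m := (mul_le_mul_of_nonneg_left hmean hδ).trans (hf m)
  have hmin : 0 ≤ f m := by nlinarith
  exact hmin.trans (hm s)

end MinimumPrinciple

section Profile

variable {S I : Type*} [Fintype I] {A : I → Type*} [∀ i, Fintype (A i)]

theorem IsPolicy.isProbVec_of_eq_softmax_of_eq_off {π : ∀ j, S → A j → ℝ} (hπ : IsPolicy π)
    {i : I} [Nonempty (A i)] {τ : ℝ} {q : A i → ℝ} {t : S} {p : S → A i → ℝ}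
    (hp_off : ∀ s, s ≠ t → p s = π i s) (hp_on : p t = softmax τ q) (s : S) :
    IsProbVec (p s) := by
  obtain rfl | hs := eq_or_ne s t
  · exact hp_on ▸ isProbVec_softmax τ q
  · exact hp_off s hs ▸ hπ i s

variable [DecidableEq I]

theorem IsPolicy.update {π : ∀ j, S → A j → ℝ} (hπ : IsPolicy π) {i : I} {p : S → A i → ℝ}
    (hp : ∀ s, IsProbVec (p s)) : IsPolicy (Function.update π i p) :=
  (Function.forall_update_iff π fun _ q => ∀ s, IsProbVec (q s)).2 ⟨hp, fun j _ => hπ j⟩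

theorem IsPolicy.isProbVec_jointDist {π : ∀ j, S → A j → ℝ} (hπ : IsPolicy π) (s : S) :
    IsProbVec (jointDist π s) := by
  refine ⟨fun a => prod_nonneg fun j _ => (hπ j s).1 (a j), ?_⟩
  simp only [jointDist]
  rw [← Fintype.prod_sum]
  exact prod_eq_one fun j _ => (hπ j s).2

theorem IsPolicy.isProbVec_transMat [Fintype S] {P : S → (∀ i, A i) → S → ℝ}
    {π : ∀ j, S → A j → ℝ} (hπ : IsPolicy π) (hP : IsKernel P) (s : S) :
    IsProbVec (transMat P π s) := by
  have hjoint := hπ.isProbVec_jointDist s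
  refine ⟨fun s' => sum_nonneg fun a _ => mul_nonneg (hjoint.1 a) ((hP s a).1 s'), ?_⟩
  simp only [transMat]
  rw [sum_comm]
  simp only [← mul_sum, (hP s _).2, mul_one, hjoint.2]

end Profile

section Update

variable {S I : Type*} [Fintype I] [DecidableEq I] {A : I → Type*}

theorem jointDist_update (π : ∀ j, S → A j → ℝ) (i : I) (p : S → A i → ℝ) (s : S)
    (a : ∀ j, A j) :
    jointDist (Function.update π i p) s a = p s (a i) * ∏ j ∈ univ.erase i, π j s (a j) := by
  rw [jointDist, ← mul_prod_erase univ _ (mem_univ i), Function.update_self]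
  congr 1
  exact prod_congr rfl fun j hj => by rw [Function.update_of_ne (ne_of_mem_erase hj)]

theorem sum_mul_sum_ite_prod_erase [∀ i, Fintype (A i)] [∀ i, DecidableEq (A i)]
    (π : ∀ j, S → A j → ℝ) (i : I) (p : S → A i → ℝ) (s : S) (f : (∀ j, A j) → ℝ) :
    ∑ b, p s b * ∑ a : ∀ j, A j,
        (if a i = b then (∏ j ∈ univ.erase i, π j s (a j)) * f a else 0) =
      ∑ a, jointDist (Function.update π i p) s a * f a := by
  simp only [mul_sum, mul_ite, mul_zero]
  rw [sum_comm]
  simp only [sum_ite_eq, mem_univ, if_true, jointDist_update, mul_assoc]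

end Update

section Bellman

variable {S I : Type*} [Fintype S] [Fintype I] [DecidableEq I] {A : I → Type*}
  [∀ i, Fintype (A i)] {δ τ : ℝ} {P : S → (∀ i, A i) → S → ℝ} {u : S → (∀ i, A i) → ℝ}

/-- The one-step Bellman operator of the `τ`-smoothed game for player `i` under the profile `π`;
`IsSmoothedValueFun` says that a function is a fixed point of it. -/
noncomputable def smoothedBellman (δ τ : ℝ) (P : S → (∀ i, A i) → S → ℝ)
    (u : S → (∀ i, A i) → ℝ) (π : ∀ j, S → A j → ℝ) (i : I) (V : S → ℝ) (s : S) : ℝ :=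
  expPay u π s - τ * negent (π i s) + δ * ∑ s', transMat P π s s' * V s'

theorem smoothedBellman_congr {π π' : ∀ j, S → A j → ℝ} {s : S} (h : ∀ j, π j s = π' j s)
    (i : I) (V : S → ℝ) :
    smoothedBellman δ τ P u π i V s = smoothedBellman δ τ P u π' i V s := by
  simp only [smoothedBellman, expPay, transMat, jointDist, h]

theorem expPay_add_discounted_eq_sum_jointDist (π : ∀ j, S → A j → ℝ) (V : S → ℝ) (s : S) :
    expPay u π s + δ * ∑ s', transMat P π s s' * V s' =
      ∑ a, jointDist π s a * (u s a + δ * ∑ s', P s a s' * V s') := by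
  simp only [expPay, transMat, mul_add, sum_add_distrib, sum_mul, mul_sum]
  rw [sum_comm]
  simp only [mul_assoc, mul_left_comm δ]

theorem smoothedBellman_update_eq_regularizedPayoff [∀ i, DecidableEq (A i)]
    {π : ∀ j, S → A j → ℝ} {i : I} {p : S → A i → ℝ} (hp : IsPolicy (Function.update π i p))
    (V : S → ℝ) (s : S) :
    smoothedBellman δ τ P u (Function.update π i p) i V s =
      regularizedPayoff τ (Qsmooth δ τ P u π V i s) (p s) + τ * negent (π i s) := by
  have hQ : ∑ b, p s b * Qsmooth δ τ P u π V i s b =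
      expPay u (Function.update π i p) s
        + δ * ∑ s', transMat P (Function.update π i p) s s' * V s' - τ * negent (π i s) := by
    simp only [Qsmooth]
    rw [sum_mul_sum_ite_prod_erase, expPay_add_discounted_eq_sum_jointDist, sub_eq_add_neg,
      ← (hp.isProbVec_jointDist s).sum_mul_add_const]
    exact sum_congr rfl fun a _ => by ring
  rw [smoothedBellman, regularizedPayoff, hQ, Function.update_self]
  ring

theorem IsSmoothedValueFun.smoothedBellman_le {π : ∀ j, S → A j → ℝ} {i : I} {W V : S → ℝ}
    (hW : IsSmoothedValueFun δ τ P u π i W) (hπ : IsPolicy π) (hP : IsKernel P)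
    (hδ : 0 ≤ δ) (hδ1 : δ < 1) (hV : V ≤ smoothedBellman δ τ P u π i V) :
    smoothedBellman δ τ P u π i V ≤ W := by
  have hT := hπ.isProbVec_transMat hP
  have hdiff : ∀ s, W s - smoothedBellman δ τ P u π i V s =
      δ * ∑ s', transMat P π s s' * (W s' - V s') := fun s => by
    rw [hW s, smoothedBellman]
    simp only [mul_sub, sum_sub_distrib]
    ring
  have hVW : ∀ s, 0 ≤ W s - V s := nonneg_of_discounted_mean_le hT hδ hδ1 fun s => by
    rw [← hdiff s]
    exact sub_le_sub_left (hV s) (W s)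
  intro s
  rw [← sub_nonneg, hdiff s]
  exact mul_nonneg hδ (sum_nonneg fun s' _ => mul_nonneg ((hT s).1 s') (hVW s'))

end Bellman

section SmoothedBestResponse

variable {S I : Type*} [Fintype S] [Fintype I] [DecidableEq I] {A : I → Type*}
  [∀ i, Fintype (A i)] [∀ i, DecidableEq (A i)] {δ τ : ℝ} {P : S → (∀ i, A i) → S → ℝ}
  {u : S → (∀ i, A i) → ℝ} {π : ∀ j, S → A j → ℝ} {i : I} {V : S → ℝ} {t : S} {p : S → A i → ℝ}
  [Nonempty (A i)] [DecidableEq S]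

theorem add_single_le_smoothedBellman_update (hτ : 0 < τ) (hπ : IsPolicy π)
    (hV : IsSmoothedValueFun δ τ P u π i V) (hp_off : ∀ s, s ≠ t → p s = π i s)
    (hp_on : p t = softmax τ (Qsmooth δ τ P u π V i t)) :
    V + (Pi.single t (τ / 2 * l2norm (fun a => p t a - π i t a) ^ 2) : S → ℝ) ≤
      smoothedBellman δ τ P u (Function.update π i p) i V := by
  have hp := hπ.isProbVec_of_eq_softmax_of_eq_off hp_off hp_on
  have hfix : ∀ s, V s = smoothedBellman δ τ P u π i V s := hV
  intro s
  rw [Pi.add_apply]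
  obtain rfl | hs := eq_or_ne s t
  · have hgain := regularizedPayoff_add_sq_l2norm_le_softmax hτ (Qsmooth δ τ P u π V i s) (hπ i s)
    have hself := smoothedBellman_update_eq_regularizedPayoff (δ := δ) (τ := τ) (P := P) (u := u)
      (p := π i) (by rwa [Function.update_eq_self]) V s
    rw [Function.update_eq_self, ← hfix s] at hself
    rw [Pi.single_eq_same, smoothedBellman_update_eq_regularizedPayoff (hπ.update hp), hp_on]
    linarith
  · have hagree : ∀ j, Function.update π i p j s = π j s :=
      (Function.forall_update_iff π fun j q => q s = π j s).2 ⟨hp_off s hs, fun _ _ => rfl⟩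
    rw [Pi.single_eq_of_ne hs, add_zero, smoothedBellman_congr hagree, ← hfix s]

theorem add_single_le_smoothedValueFun_update (hδ : 0 ≤ δ) (hδ1 : δ < 1)
    (hP : IsKernel P) (hτ : 0 < τ) (hπ : IsPolicy π) (hV : IsSmoothedValueFun δ τ P u π i V)
    (hp_off : ∀ s, s ≠ t → p s = π i s)
    (hp_on : p t = softmax τ (Qsmooth δ τ P u π V i t)) {W : S → ℝ}
    (hW : IsSmoothedValueFun δ τ P u (Function.update π i p) i W) :
    V + (Pi.single t (τ / 2 * l2norm (fun a => p t a - π i t a) ^ 2) : S → ℝ) ≤ W := by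
  have hstep := add_single_le_smoothedBellman_update hτ hπ hV hp_off hp_on
  have hgain : 0 ≤ (Pi.single t (τ / 2 * l2norm (fun a => p t a - π i t a) ^ 2) : S → ℝ) :=
    Pi.single_nonneg.2 (by positivity)
  have hp := hπ.isProbVec_of_eq_softmax_of_eq_off hp_off hp_on
  exact hstep.trans (hW.smoothedBellman_le (hπ.update hp) hP hδ hδ1
    ((le_add_of_nonneg_right hgain).trans hstep))

end SmoothedBestResponse

/-- **One-step potential improvement for the smoothed best response update.** -/
theorem one_step_smoothed_br_potential_improvement
    {S I : Type*} [Fintype S] [Nonempty S] [DecidableEq S]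
    [Fintype I] [Nonempty I] [DecidableEq I]
    {A : I → Type*} [∀ i, Fintype (A i)] [∀ i, Nonempty (A i)] [∀ i, DecidableEq (A i)]
    (δ : ℝ) (hδ : 0 < δ) (hδ1 : δ < 1)
    (P : S → (∀ i, A i) → S → ℝ) (hP : IsKernel P)
    (u : I → S → (∀ i, A i) → ℝ)
    (τ : ℝ) (hτ : 0 < τ)
    (α : ℝ) (hα : 0 ≤ α)
    (Vt : I → (∀ j, S → A j → ℝ) → S → ℝ)
    (hVt : ∀ i π, IsPolicy π → IsSmoothedValueFun δ τ P (u i) π i (Vt i π))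
    (Φt : (∀ j, S → A j → ℝ) → S → ℝ)
    (hΦt : ∀ (s : S) (i : I) (π : ∀ j, S → A j → ℝ), IsPolicy π →
      ∀ (πi' : S → A i → ℝ), (∀ s', IsProbVec (πi' s')) →
        |(Φt (Function.update π i πi') s - Φt π s) -
          (Vt i (Function.update π i πi') s - Vt i π s)| ≤ α)
    (π : ∀ j, S → A j → ℝ) (hπ : IsPolicy π)
    (ib : I) (sb : S)
    -- the one-state smoothed best response update of player `ib` at state `sb`
    (πplus : S → A ib → ℝ)
    (hplus_off : ∀ s, s ≠ sb → πplus s = π ib s)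
    (hplus_on : ∀ a, πplus sb a =
      softmax τ (fun a' => Qsmooth δ τ P (u ib) π (Vt ib π) ib sb a') a) :
    ∀ (μ : S → ℝ), IsProbVec μ →
      (∑ s, μ s * Φt (Function.update π ib πplus) s) - (∑ s, μ s * Φt π s) ≥
        (τ * μ sb / 2) * (l2norm (fun a => πplus sb a - π ib sb a)) ^ 2 - α := by
  intro μ hμ
  have hon : πplus sb = softmax τ (Qsmooth δ τ P (u ib) π (Vt ib π) ib sb) := funext hplus_on
  have hprob := hπ.isProbVec_of_eq_softmax_of_eq_off hplus_off hon
  have hvalue := add_single_le_smoothedValueFun_update hδ.le hδ1 hP hτ hπ (hVt ib π hπ)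
    hplus_off hon (hVt ib _ (hπ.update hprob))
  have hpotential := hμ.mul_sub_le_sum_mul_sub_sum_mul (b := sb)
    (c := τ / 2 * l2norm (fun a => πplus sb a - π ib sb a) ^ 2)
    (f := Φt (Function.update π ib πplus)) (g := Φt π) (α := α) fun s => by
      have happrox := (abs_le.1 (hΦt s ib π hπ πplus hprob)).1
      have hgain := hvalue s
      rw [Pi.add_apply] at hgain
      linarith
  linarith
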